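/- arXiv:1912.06412 — 6 statements merged into one kernel-verified Lean document; each statement's English description precedes it below -/
import Mathlib

section
/- Let 0 < q < 1/2, p = 1 - q, and s = 4pq, so 0 < s < 1. Then as z → ∞ (z an integer), I_s(z, 1/2) ~ s^z / √(π (1−s) z); that is, the ratio I_s(z, 1/2) · √(π (1−s) z) / s^z tends to 1 as z → ∞. -/
open scoped BigOperators
open Filter

/-- The Beta function `B(a,b) = ∫_0^1 t^(a-1) (1-t)^(b-1) dt`. -/
noncomputable def Beta (a b : ℝ) : ℝ :=
  ∫ t in (0:ℝ)..1, t ^ (a - 1) * (1 - t) ^ (b - 1)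

/-- The regularized incomplete Beta function
`I_x(a,b) = (1/B(a,b)) ∫_0^x t^(a-1) (1-t)^(b-1) dt`. -/
noncomputable def regBeta (x a b : ℝ) : ℝ :=
  (∫ t in (0:ℝ)..x, t ^ (a - 1) * (1 - t) ^ (b - 1)) / Beta a b

lemma beta_half_tendsto :
    Tendsto (fun n : ℕ => Real.sqrt n * Beta ((n:ℝ) + 1) (1 / 2)) atTop
      (nhds (Real.sqrt Real.pi)) := by
  have h := Complex.GammaSeq_tendsto_Gamma (1 / 2 : ℂ)
  have h2 := (Complex.continuous_re.tendsto _).comp h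
  have e : (Complex.Gamma (1 / 2)).re = Real.sqrt Real.pi := by
    have : (1 / 2 : ℂ) = ((1 / 2 : ℝ) : ℂ) := by push_cast; rfl
    rw [this, Complex.Gamma_ofReal, Complex.ofReal_re, Real.Gamma_one_half_eq]
  rw [e] at h2
  refine h2.congr fun n => ?_
  simp only [Function.comp]
  rw [Complex.GammaSeq_eq_betaIntegral_of_re_pos (by norm_num), Complex.betaIntegral_symm]
  have hb : Complex.betaIntegral ((n:ℂ) + 1) (1 / 2) = ((Beta ((n:ℝ) + 1) (1 / 2) : ℝ) : ℂ) := by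
    rw [Complex.betaIntegral, Beta, ← intervalIntegral.integral_ofReal]
    refine intervalIntegral.integral_congr fun t ht => ?_
    rw [Set.uIcc_of_le zero_le_one] at ht
    rw [Complex.ofReal_mul, Complex.ofReal_cpow ht.1,
      Complex.ofReal_cpow (by linarith [ht.2] : (0:ℝ) ≤ 1 - t)]
    push_cast
    rfl
  have hc : (n:ℂ) ^ (1 / 2 : ℂ) = ((Real.sqrt n : ℝ) : ℂ) := by
    rw [Real.sqrt_eq_rpow, Complex.ofReal_cpow (Nat.cast_nonneg n)]
    push_cast
    rfl
  rw [hb, hc, ← Complex.ofReal_mul, Complex.ofReal_re]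

lemma rpow_half_eq {t : ℝ} (ht : t < 1) :
    (1 - t) ^ ((1 / 2 : ℝ) - 1) = (Real.sqrt (1 - t))⁻¹ := by
  rw [Real.sqrt_eq_rpow, ← Real.rpow_neg (by linarith)]
  norm_num

lemma inv_sqrt_bounds {s t : ℝ} (hs : s < 1) (ht : t ≤ s) :
    (Real.sqrt (1 - t))⁻¹ ≤ (Real.sqrt (1 - s))⁻¹ ∧
    (Real.sqrt (1 - s))⁻¹ - ((Real.sqrt (1 - s)) ^ 3)⁻¹ * (s - t) ≤ (Real.sqrt (1 - t))⁻¹ := by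
  have hb : 0 < Real.sqrt (1 - s) := Real.sqrt_pos.2 (by linarith)
  have hab : Real.sqrt (1 - s) ≤ Real.sqrt (1 - t) := Real.sqrt_le_sqrt (by linarith)
  have ha2 := Real.sq_sqrt (by linarith : (0:ℝ) ≤ 1 - t)
  have hb2 := Real.sq_sqrt (by linarith : (0:ℝ) ≤ 1 - s)
  generalize Real.sqrt (1 - s) = b at *
  generalize Real.sqrt (1 - t) = a at *
  have ha : 0 < a := by linarith
  refine ⟨inv_anti₀ hb hab, ?_⟩
  have : s - t = a ^ 2 - b ^ 2 := by linarith
  rw [this]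
  have key : a⁻¹ - (b⁻¹ - (b ^ 3)⁻¹ * (a ^ 2 - b ^ 2))
      = (a - b) * (a * (a + b) - b ^ 2) / (a * b ^ 3) := by
    field_simp
    ring
  have : 0 ≤ (a - b) * (a * (a + b) - b ^ 2) / (a * b ^ 3) := by
    apply div_nonneg _ (by positivity)
    apply mul_nonneg (by linarith)
    nlinarith
  linarith

lemma incBeta_tendsto {s : ℝ} (hs0 : 0 < s) (hs1 : s < 1) :
    Tendsto (fun n : ℕ => ((n:ℝ) + 1) *
      (∫ t in (0:ℝ)..s, t ^ (((n:ℝ) + 1) - 1) * (1 - t) ^ ((1 / 2 : ℝ) - 1)) / s ^ (n + 1)) atTop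
      (nhds (Real.sqrt (1 - s))⁻¹) := by
  have hJ : ∀ n : ℕ, (∫ t in (0:ℝ)..s, t ^ (((n:ℝ) + 1) - 1) * (1 - t) ^ ((1 / 2 : ℝ) - 1))
      = ∫ t in (0:ℝ)..s, t ^ n * (Real.sqrt (1 - t))⁻¹ := by
    intro n
    refine intervalIntegral.integral_congr fun t ht => ?_
    rw [Set.uIcc_of_le hs0.le] at ht
    rw [rpow_half_eq (by linarith [ht.2]), add_sub_cancel_right, Real.rpow_natCast]
  simp_rw [hJ]
  set c := (Real.sqrt (1 - s))⁻¹ with hc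
  set C := ((Real.sqrt (1 - s)) ^ 3)⁻¹ with hC
  have hInteg : ∀ n : ℕ, IntervalIntegrable (fun t : ℝ => t ^ n * (Real.sqrt (1 - t))⁻¹)
      MeasureTheory.volume 0 s := by
    intro n
    apply ContinuousOn.intervalIntegrable
    rw [Set.uIcc_of_le hs0.le]
    apply ContinuousOn.mul (by fun_prop)
    apply ContinuousOn.inv₀ (by fun_prop)
    intro t ht
    exact (Real.sqrt_pos.2 (by linarith [ht.2])).ne'
  have hup : ∀ n : ℕ, (∫ t in (0:ℝ)..s, t ^ n * (Real.sqrt (1 - t))⁻¹)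
      ≤ s ^ (n + 1) / (n + 1) * c := by
    intro n
    have : (∫ t in (0:ℝ)..s, t ^ n * c) = s ^ (n + 1) / (n + 1) * c := by
      rw [intervalIntegral.integral_mul_const, integral_pow]
      simp
    rw [← this]
    refine intervalIntegral.integral_mono_on hs0.le (hInteg n)
      (Continuous.intervalIntegrable (by fun_prop) _ _) fun t ht => ?_
    exact mul_le_mul_of_nonneg_left (inv_sqrt_bounds hs1 ht.2).1 (pow_nonneg ht.1 n)
  have hlo : ∀ n : ℕ, (c - C * s) * (s ^ (n + 1) / (n + 1)) + C * (s ^ (n + 2) / (n + 2))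
      ≤ (∫ t in (0:ℝ)..s, t ^ n * (Real.sqrt (1 - t))⁻¹) := by
    intro n
    have : (∫ t in (0:ℝ)..s, ((c - C * s) * t ^ n + C * t ^ (n + 1)))
        = (c - C * s) * (s ^ (n + 1) / (n + 1)) + C * (s ^ (n + 2) / (n + 2)) := by
      rw [intervalIntegral.integral_add (Continuous.intervalIntegrable (by fun_prop) _ _)
        (Continuous.intervalIntegrable (by fun_prop) _ _),
        intervalIntegral.integral_const_mul, intervalIntegral.integral_const_mul,
        integral_pow, integral_pow]
      push_cast
      rw [zero_pow (by omega), zero_pow (by omega)]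
      ring
    rw [← this]
    refine intervalIntegral.integral_mono_on hs0.le
      (Continuous.intervalIntegrable (by fun_prop) _ _) (hInteg n) fun t ht => ?_
    have := mul_le_mul_of_nonneg_left (inv_sqrt_bounds hs1 ht.2).2 (pow_nonneg ht.1 n)
    refine le_trans (le_of_eq ?_) this
    rw [← hc, ← hC]
    ring
  have hlim : Tendsto (fun n : ℕ => c - C * s * (1 / ((n:ℝ) + 1))) atTop (nhds c) := by
    have := (tendsto_one_div_add_atTop_nhds_zero_nat (𝕜 := ℝ)).const_mul (C * s)
    have := this.const_sub c
    simpa using this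
  have hCs : 0 ≤ C * s := by positivity
  refine tendsto_of_tendsto_of_tendsto_of_le_of_le hlim tendsto_const_nhds (fun n => ?_)
    (fun n => ?_)
  · have hp : 0 < s ^ (n + 1) := by positivity
    have hn : (0:ℝ) < (n:ℝ) + 1 := by positivity
    have hn2 : (0:ℝ) < (n:ℝ) + 2 := by positivity
    simp only
    rw [le_div_iff₀ hp]
    have h1 := mul_le_mul_of_nonneg_left (hlo n) hn.le
    refine le_trans ?_ h1
    have e1 : ((n:ℝ) + 1) * ((c - C * s) * (s ^ (n + 1) / (n + 1)) + C * (s ^ (n + 2) / (n + 2)))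
        = (c - C * s * (1 / ((n:ℝ) + 2))) * s ^ (n + 1) := by
      field_simp
      ring
    rw [e1]
    gcongr
    linarith
  · have hp : 0 < s ^ (n + 1) := by positivity
    have hn : (0:ℝ) < (n:ℝ) + 1 := by positivity
    simp only
    rw [div_le_iff₀ hp]
    refine le_trans (mul_le_mul_of_nonneg_left (hup n) hn.le) (le_of_eq ?_)
    field_simp

/-- asymptotics `I_s(z,1/2) ~ s^z / √(π(1-s)z)` as `z → ∞`. -/
theorem regBeta_asymptotics (q p s : ℝ) (hq0 : 0 < q) (hq2 : q < 1 / 2)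
    (hp : p = 1 - q) (hs : s = 4 * p * q) :
    Tendsto (fun z : ℕ =>
        regBeta s (z : ℝ) (1 / 2) * Real.sqrt (Real.pi * (1 - s) * (z : ℝ)) / s ^ z)
      atTop (nhds 1) := by
  have hs0 : 0 < s := by
    rw [hs, hp]
    have : 0 < 1 - q := by linarith
    positivity
  have hs1 : s < 1 := by
    rw [hs, hp]
    nlinarith [sq_pos_of_pos (by linarith : (0:ℝ) < 1 - 2 * q)]
  rw [← tendsto_add_atTop_iff_nat 1]
  have hpi : 0 < Real.sqrt Real.pi := Real.sqrt_pos.2 Real.pi_pos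
  have hb : 0 < Real.sqrt (1 - s) := Real.sqrt_pos.2 (by linarith)
  have h1 := incBeta_tendsto hs0 hs1
  have h2 := beta_half_tendsto.inv₀ hpi.ne'
  have h3 : Tendsto (fun n : ℕ => Real.sqrt ((n:ℝ) / ((n:ℝ) + 1))) atTop (nhds 1) := by
    have := (Real.continuous_sqrt.tendsto 1).comp (tendsto_natCast_div_add_atTop (1:ℝ))
    simpa [Function.comp_def] using this
  have h4 := ((h1.mul h2).mul h3).mul_const (Real.sqrt (1 - s) * Real.sqrt Real.pi)
  have e : (Real.sqrt (1 - s))⁻¹ * (Real.sqrt Real.pi)⁻¹ * 1 *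
      (Real.sqrt (1 - s) * Real.sqrt Real.pi) = 1 := by
    field_simp
  rw [e] at h4
  refine h4.congr' ?_
  filter_upwards [eventually_ge_atTop 1] with n hn
  have hn0 : (0:ℝ) < n := by exact_mod_cast hn
  have hsn : 0 < Real.sqrt n := Real.sqrt_pos.2 hn0
  have hsn1 : 0 < Real.sqrt ((n:ℝ) + 1) := Real.sqrt_pos.2 (by positivity)
  have hsq := Real.sq_sqrt (by positivity : (0:ℝ) ≤ (n:ℝ) + 1)
  have hpw : 0 < s ^ (n + 1) := by positivity
  rw [regBeta, Real.sqrt_div hn0.le]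
  push_cast
  rw [Real.sqrt_mul (mul_nonneg Real.pi_pos.le (by linarith)), Real.sqrt_mul Real.pi_pos.le]
  generalize (∫ t in (0:ℝ)..s, t ^ (((n:ℝ) + 1) - 1) * (1 - t) ^ ((1 / 2 : ℝ) - 1)) = J
  generalize Beta ((n:ℝ) + 1) (1 / 2) = B
  generalize Real.sqrt ((n:ℝ) + 1) = r at *
  rw [← hsq, mul_inv, div_eq_mul_inv J B]
  field_simp
end

section
/- Let 0 < q < 1/2, p = 1 - q, λ = q/p, s = 4pq, and for integers A ≥ z ≥ 1 define P_A(z) = (I_{4pq}(z, 1/2) − λ^{A+1}) / (1 − λ^{A+1}). Then for any function A : ℕ → ℕ with A(z) ≥ z for all z, we have P_{A(z)}(z) ~ s^z / √(π (1−s) z) as z → ∞; that is, P_{A(z)}(z) · √(π (1−s) z) / s^z tends to 1 as z → ∞, with an asymptotic independent of the choice of A. -/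
open scoped BigOperators
open Filter

lemma nak_beta_eq (a b : ℝ) (ha : 0 < a) (hb : 0 < b) :
    Beta a b = Real.Gamma a * Real.Gamma b / Real.Gamma (a + b) := by
  have h := Complex.Gamma_mul_Gamma_eq_betaIntegral (s := (a:ℂ)) (t := (b:ℂ))
    (by simpa using ha) (by simpa using hb)
  have h2 : Complex.betaIntegral (a:ℂ) (b:ℂ) = ((Beta a b : ℝ) : ℂ) := by
    unfold Complex.betaIntegral Beta
    rw [← intervalIntegral.integral_ofReal]
    apply intervalIntegral.integral_congr
    intro x hx
    rw [Set.uIcc_of_le zero_le_one] at hx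
    have h1 : (0:ℝ) ≤ 1 - x := by linarith [hx.2]
    simp only
    rw [Complex.ofReal_mul, Complex.ofReal_cpow hx.1, Complex.ofReal_cpow h1]
    push_cast
    rfl
  rw [h2, ← Complex.ofReal_add, Complex.Gamma_ofReal, Complex.Gamma_ofReal,
    Complex.Gamma_ofReal] at h
  norm_cast at h
  have := (Real.Gamma_pos_of_pos (add_pos ha hb)).ne'
  field_simp
  linarith

lemma nak_gamma_mid (x : ℝ) (hx : 0 < x) :
    Real.Gamma (x + 1/2) ^ 2 ≤ Real.Gamma x * Real.Gamma (x + 1) := by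
  have h := Real.Gamma_mul_add_mul_le_rpow_Gamma_mul_rpow_Gamma (s := x) (t := x + 1)
    (a := 1/2) (b := 1/2) hx (by linarith) (by norm_num) (by norm_num) (by norm_num)
  rw [← Real.sqrt_eq_rpow, ← Real.sqrt_eq_rpow] at h
  have e : (1/2 : ℝ) * x + 1/2 * (x+1) = x + 1/2 := by ring
  rw [e] at h
  have g1 := Real.Gamma_pos_of_pos hx
  have g2 := Real.Gamma_pos_of_pos (show 0 < x + 1 by linarith)
  have g3 := Real.Gamma_pos_of_pos (show 0 < x + 1/2 by linarith)
  calc Real.Gamma (x + 1/2) ^ 2 ≤ (√(Real.Gamma x) * √(Real.Gamma (x+1))) ^ 2 := by gcongr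
    _ = _ := by rw [mul_pow, Real.sq_sqrt g1.le, Real.sq_sqrt g2.le]

lemma nak_gamma_ratio :
    Tendsto (fun z : ℕ => Real.Gamma ((z:ℝ) + 1/2) / (Real.Gamma z * √(z:ℝ))) atTop (nhds 1) := by
  have key : ∀ᶠ z : ℕ in atTop, √(1 - (1/2) / (z:ℝ)) ≤
      Real.Gamma ((z:ℝ) + 1/2) / (Real.Gamma z * √(z:ℝ)) ∧
      Real.Gamma ((z:ℝ) + 1/2) / (Real.Gamma z * √(z:ℝ)) ≤ 1 := by
    filter_upwards [eventually_ge_atTop 1] with z hz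
    have hz' : (1:ℝ) ≤ z := by exact_mod_cast hz
    have hz0 : (0:ℝ) < z := by linarith
    have g1 := Real.Gamma_pos_of_pos hz0
    have g3 := Real.Gamma_pos_of_pos (show 0 < (z:ℝ) + 1/2 by linarith)
    have g4 := Real.Gamma_pos_of_pos (show 0 < (z:ℝ) - 1/2 by linarith)
    have a1 := nak_gamma_mid z hz0
    rw [Real.Gamma_add_one hz0.ne'] at a1
    have a2 := nak_gamma_mid ((z:ℝ) - 1/2) (by linarith)
    have a3 := Real.Gamma_add_one (show (z:ℝ) - 1/2 ≠ 0 by linarith)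
    have e1 : (z:ℝ) - 1/2 + 1/2 = z := by ring
    have e2 : (z:ℝ) - 1/2 + 1 = z + 1/2 := by ring
    rw [e1] at a2
    rw [e2] at a2 a3
    have sq : √(z:ℝ) ^ 2 = z := Real.sq_sqrt hz0.le
    have sp : 0 < √(z:ℝ) := Real.sqrt_pos.mpr hz0
    constructor
    · apply Real.sqrt_le_iff.mpr
      refine ⟨by positivity, ?_⟩
      rw [div_pow, mul_pow, sq, le_div_iff₀ (by positivity)]
      have : (1 - 1/2/(z:ℝ)) * (Real.Gamma z ^ 2 * z) = (z - 1/2) * Real.Gamma z ^ 2 := by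
        field_simp
      rw [this]
      calc ((z:ℝ) - 1/2) * Real.Gamma z ^ 2
          ≤ (z - 1/2) * (Real.Gamma (z - 1/2) * Real.Gamma (z + 1/2)) := by
            apply mul_le_mul_of_nonneg_left a2; linarith
        _ = ((z - 1/2) * Real.Gamma (z - 1/2)) * Real.Gamma (z + 1/2) := by ring
        _ = Real.Gamma (z + 1/2) ^ 2 := by rw [← a3]; ring
    · rw [div_le_one (by positivity)]
      apply (pow_le_pow_iff_left₀ g3.le (by positivity) two_ne_zero).mp
      rw [mul_pow, sq]
      linarith
  refine tendsto_of_tendsto_of_tendsto_of_le_of_le' (g := fun z : ℕ => √(1 - (1/2) / (z:ℝ)))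
    (h := fun _ => 1) ?_ tendsto_const_nhds (key.mono fun _ h => h.1) (key.mono fun _ h => h.2)
  have : Tendsto (fun z : ℕ => (1/2 : ℝ) / (z:ℝ)) atTop (nhds 0) :=
    tendsto_const_div_atTop_nhds_zero_nat _
  have := (tendsto_const_nhds (x := (1:ℝ))).sub this
  simpa using this.sqrt

lemma nak_J_bounds (s : ℝ) (hs0 : 0 < s) (hs1 : s < 1) (n : ℕ) :
    (1 / √(1-s)) * (s^(n+1) / (n+1)) -
      1 / (2 * √(1-s)^3) * (s * (s^(n+1)/(n+1)) - s^(n+2)/(n+2)) ≤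
      (∫ t in (0:ℝ)..s, t ^ (((n+1:ℕ):ℝ) - 1) * (1 - t) ^ ((1/2:ℝ) - 1)) ∧
    (∫ t in (0:ℝ)..s, t ^ (((n+1:ℕ):ℝ) - 1) * (1 - t) ^ ((1/2:ℝ) - 1)) ≤
      (1 / √(1-s)) * (s^(n+1) / (n+1)) := by
  have hw : 0 < √(1-s) := Real.sqrt_pos.mpr (by linarith)
  have hw2 : √(1-s)^2 = 1 - s := Real.sq_sqrt (by linarith)
  have hcongr : (∫ t in (0:ℝ)..s, t ^ (((n+1:ℕ):ℝ) - 1) * (1 - t) ^ ((1/2:ℝ) - 1)) =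
      ∫ t in (0:ℝ)..s, t ^ n * (1 / √(1-t)) := by
    apply intervalIntegral.integral_congr
    intro t ht
    rw [Set.uIcc_of_le hs0.le] at ht
    have e : (1/2:ℝ) - 1 = -(1/2) := by norm_num
    simp only
    rw [e, Real.rpow_neg (by linarith [ht.2]), ← Real.sqrt_eq_rpow]
    simp
  rw [hcongr]
  have hint : IntervalIntegrable (fun t : ℝ => t ^ n * (1 / √(1-t))) MeasureTheory.volume 0 s := by
    apply ContinuousOn.intervalIntegrable
    rw [Set.uIcc_of_le hs0.le]
    apply ContinuousOn.mul (by fun_prop)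
    apply ContinuousOn.div (by fun_prop) (by fun_prop)
    intro t ht
    exact (Real.sqrt_pos.mpr (by linarith [ht.2])).ne'
  constructor
  · have hv : ∫ t in (0:ℝ)..s, ((1 / √(1-s)) * t^n - 1 / (2 * √(1-s)^3) * (s * t^n - t^(n+1))) =
        (1 / √(1-s)) * (s^(n+1) / (n+1)) -
      1 / (2 * √(1-s)^3) * (s * (s^(n+1)/(n+1)) - s^(n+2)/(n+2)) := by
      rw [intervalIntegral.integral_sub (Continuous.intervalIntegrable (by fun_prop) _ _)
        (Continuous.intervalIntegrable (by fun_prop) _ _),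
        intervalIntegral.integral_const_mul, intervalIntegral.integral_const_mul,
        intervalIntegral.integral_sub (Continuous.intervalIntegrable (by fun_prop) _ _)
        (Continuous.intervalIntegrable (by fun_prop) _ _),
        intervalIntegral.integral_const_mul, integral_pow, integral_pow]
      push_cast
      rw [zero_pow (by omega), zero_pow (by omega)]
      ring
    rw [← hv]
    apply intervalIntegral.integral_mono_on hs0.le
      (Continuous.intervalIntegrable (by fun_prop) _ _) hint
    intro t ht
    have hu2 : √(1-t)^2 = 1 - t := Real.sq_sqrt (by linarith [ht.2])
    have huw : √(1-s) ≤ √(1-t) := Real.sqrt_le_sqrt (by linarith [ht.2])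
    have hst : s - t = (√(1-t) - √(1-s)) * (√(1-t) + √(1-s)) := by nlinarith
    have : 1 / √(1-s) - 1 / (2 * √(1-s)^3) * (s - t) ≤ 1 / √(1-t) := by
      rw [hst]
      generalize √(1-s) = w at *
      generalize √(1-t) = u at *
      have hu : 0 < u := by linarith
      have : 1 / u - (1 / w - 1 / (2 * w^3) * ((u - w) * (u + w))) =
          (u - w)^2 * (u + 2 * w) / (2 * w^3 * u) := by
        field_simp
        ring
      have h2 : 0 ≤ (u - w)^2 * (u + 2 * w) / (2 * w^3 * u) := by positivity
      linarith
    have h0 : 0 ≤ t ^ n := pow_nonneg ht.1 n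
    have := mul_le_mul_of_nonneg_left this h0
    calc _ = t ^ n * (1 / √(1-s) - 1 / (2 * √(1-s)^3) * (s - t)) := by ring
      _ ≤ _ := this
  · have hv : ∫ t in (0:ℝ)..s, ((1 / √(1-s)) * t^n) = (1 / √(1-s)) * (s^(n+1) / (n+1)) := by
      rw [intervalIntegral.integral_const_mul, integral_pow]
      simp
    rw [← hv]
    apply intervalIntegral.integral_mono_on hs0.le hint
      (Continuous.intervalIntegrable (by fun_prop) _ _)
    intro t ht
    have huw : √(1-s) ≤ √(1-t) := Real.sqrt_le_sqrt (by linarith [ht.2])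
    have h0 : 0 ≤ t ^ n := pow_nonneg ht.1 n
    rw [mul_comm]
    gcongr

lemma nak_J_lim (s : ℝ) (hs0 : 0 < s) (hs1 : s < 1) :
    Tendsto (fun z : ℕ => (∫ t in (0:ℝ)..s, t ^ ((z:ℝ) - 1) * (1 - t) ^ ((1/2:ℝ) - 1)) *
      z * √(1-s) / s ^ z) atTop (nhds 1) := by
  rw [← tendsto_add_atTop_iff_nat 1]
  have hw : 0 < √(1-s) := Real.sqrt_pos.mpr (by linarith)
  refine tendsto_of_tendsto_of_tendsto_of_le_of_le
    (g := fun n : ℕ => 1 - s / (2 * √(1-s)^2) * (1 / ((n:ℝ)+2)))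
    (h := fun _ => 1) ?_ tendsto_const_nhds ?_ ?_
  · have h1 : Tendsto (fun n : ℕ => 1 / ((n:ℝ) + 2)) atTop (nhds 0) := by
      have := (tendsto_const_div_atTop_nhds_zero_nat (1:ℝ)).comp (tendsto_add_atTop_nat 2)
      refine this.congr fun n => ?_
      simp
    simpa using (tendsto_const_nhds (x := (1:ℝ))).sub (h1.const_mul (s / (2 * √(1-s)^2)))
  · intro n
    have h := (nak_J_bounds s hs0 hs1 n).1
    simp only
    rw [le_div_iff₀ (by positivity)]
    have h2 := mul_le_mul_of_nonneg_right h (show 0 ≤ ((n+1:ℕ):ℝ) * √(1-s) by positivity)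
    rw [← mul_assoc] at h2
    refine le_trans (le_of_eq ?_) (h2.trans (le_of_eq (by ring)))
    generalize √(1-s) = w at *
    push_cast
    field_simp
    ring
  · intro n
    have h := (nak_J_bounds s hs0 hs1 n).2
    simp only
    rw [div_le_iff₀ (by positivity)]
    have h2 := mul_le_mul_of_nonneg_right h (show 0 ≤ ((n+1:ℕ):ℝ) * √(1-s) by positivity)
    rw [← mul_assoc] at h2
    refine h2.trans (le_of_eq ?_)
    generalize √(1-s) = w at *
    push_cast
    field_simp

/-- asymptotics of `P_{A(z)}(z)` as `z → ∞`, uniform in the choice of `A`. -/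
theorem nakamoto_probability_asymptotics (q p lam s : ℝ) (hq0 : 0 < q) (hq2 : q < 1 / 2)
    (hp : p = 1 - q) (hlam : lam = q / p) (hs : s = 4 * p * q)
    (A : ℕ → ℕ) (hA : ∀ z, z ≤ A z) :
    Tendsto (fun z : ℕ =>
        ((regBeta (4 * p * q) (z : ℝ) (1 / 2) - lam ^ (A z + 1)) / (1 - lam ^ (A z + 1)))
          * Real.sqrt (Real.pi * (1 - s) * (z : ℝ)) / s ^ z)
      atTop (nhds 1) := by
  have hp0 : 1/2 < p := by linarith
  have hs0 : 0 < s := by rw [hs]; positivity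
  have hs1 : s < 1 := by
    rw [hs, hp]; nlinarith [mul_pos (show 0 < 1 - 2*q by linarith) (show 0 < 1 - 2*q by linarith)]
  have hl0 : 0 < lam := by rw [hlam]; positivity
  have hls : lam < s := by
    rw [hlam, hs, div_lt_iff₀ (by linarith)]
    nlinarith [mul_pos hq0 (show 0 < 4*p*p - 1 by nlinarith)]
  have hl1 : lam < 1 := hls.trans hs1
  have hle : ∀ z, lam ^ (A z + 1) ≤ lam ^ z := fun z =>
    pow_le_pow_of_le_one hl0.le hl1.le ((hA z).trans (Nat.le_succ _))
  have hL : Tendsto (fun z => lam ^ (A z + 1)) atTop (nhds 0) :=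
    squeeze_zero (fun z => by positivity) hle (tendsto_pow_atTop_nhds_zero_of_lt_one hl0.le hl1)
  have hD : Tendsto (fun z => 1 - lam ^ (A z + 1)) atTop (nhds 1) := by
    simpa using (tendsto_const_nhds (x := (1:ℝ))).sub hL
  have hE : Tendsto (fun z : ℕ => lam ^ (A z + 1) * √(Real.pi * (1 - s) * (z:ℝ)) / s ^ z)
      atTop (nhds 0) := by
    have hr := tendsto_self_mul_const_pow_of_lt_one (r := lam / s) (by positivity)
      ((div_lt_one hs0).mpr hls)
    have hr2 := hr.const_mul (√(Real.pi * (1 - s)))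
    rw [mul_zero] at hr2
    refine squeeze_zero (fun z => by positivity) (fun z => ?_) hr2
    have hc : 0 ≤ Real.pi * (1 - s) := mul_nonneg Real.pi_pos.le (by linarith)
    have hz : √(z:ℝ) ≤ z := by
      apply Real.sqrt_le_iff.mpr
      refine ⟨by positivity, ?_⟩
      exact_mod_cast Nat.le_self_pow two_ne_zero z
    rw [Real.sqrt_mul hc]
    calc _ ≤ lam ^ z * (√(Real.pi * (1 - s)) * z) / s ^ z := by
          have := hle z
          have h3 : 0 < s ^ z := by positivity
          generalize lam ^ (A z + 1) = L at *
          gcongr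
      _ = _ := by rw [div_pow]; ring
  have hM : Tendsto (fun z : ℕ => regBeta (4 * p * q) (z : ℝ) (1 / 2) *
      √(Real.pi * (1 - s) * (z:ℝ)) / s ^ z) atTop (nhds 1) := by
    have := (nak_J_lim s hs0 hs1).mul nak_gamma_ratio
    rw [mul_one] at this
    refine this.congr' ?_
    filter_upwards [eventually_ge_atTop 1] with z hz
    have hz0 : (0:ℝ) < z := by exact_mod_cast hz
    unfold regBeta
    rw [← hs, nak_beta_eq _ _ hz0 (by norm_num), Real.Gamma_one_half_eq,
      Real.sqrt_mul (mul_nonneg Real.pi_pos.le (by linarith)), Real.sqrt_mul Real.pi_pos.le]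
    have g1 := Real.Gamma_pos_of_pos hz0
    have g3 := Real.Gamma_pos_of_pos (show 0 < (z:ℝ) + 1/2 by linarith)
    have hpi : 0 < √Real.pi := Real.sqrt_pos.mpr Real.pi_pos
    have sz : 0 < √(z:ℝ) := Real.sqrt_pos.mpr hz0
    have sq : (z:ℝ) = √(z:ℝ) * √(z:ℝ) := (Real.mul_self_sqrt hz0.le).symm
    generalize (∫ t in (0:ℝ)..s, t ^ ((z:ℝ) - 1) * (1 - t) ^ ((1/2:ℝ) - 1)) = J
    generalize Real.Gamma ((z:ℝ) + 1/2) = G at *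
    generalize Real.Gamma (z:ℝ) = H at *
    generalize √(z:ℝ) = r at *
    rw [sq]
    field_simp
  have := (hM.sub hE).div hD one_ne_zero
  rw [sub_zero, div_one] at this
  refine this.congr fun z => ?_
  simp only [Pi.div_apply]
  ring
end

section
/- Let 0 < q < 1/2, p = 1 - q, λ = q/p, and let z ≥ 1 and A ≥ z be integers. Define P_A(z) = (I_{4pq}(z, 1/2) − λ^{A+1}) / (1 − λ^{A+1}). Then P_A(z) < P_{A+1}(z), and P_A(z) < I_{4pq}(z, 1/2); that is, the success probability of the A-Nakamoto attack is strictly increasing in the give-up threshold A and is strictly bounded above by the success probability I_{4pq}(z, 1/2) of the non-stopping attack. -/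
open scoped BigOperators
open Filter

theorem regBeta_lt_one_aux (x : ℝ) (z : ℕ) (hz : 1 ≤ z) (hx0 : 0 ≤ x) (hx : x < 1) :
    regBeta x (z : ℝ) (1 / 2) < 1 := by
  have hz1 : (0:ℝ) ≤ (z:ℝ) - 1 := by
    have : (1:ℝ) ≤ z := by exact_mod_cast hz
    linarith
  have h1 : IntervalIntegrable (fun t : ℝ => (1 - t) ^ ((1:ℝ) / 2 - 1)) MeasureTheory.volume 0 1 := by
    have h := (intervalIntegral.intervalIntegrable_rpow' (a := 0) (b := 1)
      (r := (1:ℝ) / 2 - 1) (by norm_num)).comp_sub_left 1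
    simpa using h.symm
  have hI : IntervalIntegrable (fun t : ℝ => t ^ ((z:ℝ) - 1) * (1 - t) ^ ((1:ℝ) / 2 - 1))
      MeasureTheory.volume 0 1 := by
    apply h1.continuousOn_mul
    exact (Real.continuous_rpow_const hz1).continuousOn
  have hI0 : IntervalIntegrable (fun t : ℝ => t ^ ((z:ℝ) - 1) * (1 - t) ^ ((1:ℝ) / 2 - 1))
      MeasureTheory.volume 0 x := by
    apply hI.mono_set
    rw [Set.uIcc_of_le hx0, Set.uIcc_of_le zero_le_one]
    exact Set.Icc_subset_Icc le_rfl hx.le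
  have hI1 : IntervalIntegrable (fun t : ℝ => t ^ ((z:ℝ) - 1) * (1 - t) ^ ((1:ℝ) / 2 - 1))
      MeasureTheory.volume x 1 := by
    apply hI.mono_set
    rw [Set.uIcc_of_le hx.le, Set.uIcc_of_le zero_le_one]
    exact Set.Icc_subset_Icc hx0 le_rfl
  have hadd := intervalIntegral.integral_add_adjacent_intervals hI0 hI1
  have hpos : 0 < ∫ t in x..1, t ^ ((z:ℝ) - 1) * (1 - t) ^ ((1:ℝ) / 2 - 1) := by
    apply intervalIntegral.intervalIntegral_pos_of_pos_on hI1 _ hx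
    intro t ht
    exact mul_pos (Real.rpow_pos_of_pos (by linarith [ht.1]) _)
      (Real.rpow_pos_of_pos (by linarith [ht.2]) _)
  have hnn : 0 ≤ ∫ t in (0:ℝ)..x, t ^ ((z:ℝ) - 1) * (1 - t) ^ ((1:ℝ) / 2 - 1) := by
    apply intervalIntegral.integral_nonneg hx0
    intro t ht
    exact mul_nonneg (Real.rpow_nonneg ht.1 _) (Real.rpow_nonneg (by linarith [ht.2]) _)
  unfold regBeta Beta
  rw [div_lt_one (by linarith)]
  linarith

/-- `P_A(z)` is strictly increasing in `A` and bounded by `I_{4pq}(z,1/2)`. -/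
theorem nakamoto_probability_monotone (q p lam : ℝ) (hq0 : 0 < q) (hq2 : q < 1 / 2)
    (hp : p = 1 - q) (hlam : lam = q / p) (z A : ℕ) (hz : 1 ≤ z) (hAz : z ≤ A) :
    (regBeta (4 * p * q) (z : ℝ) (1 / 2) - lam ^ (A + 1)) / (1 - lam ^ (A + 1))
        < (regBeta (4 * p * q) (z : ℝ) (1 / 2) - lam ^ (A + 1 + 1)) / (1 - lam ^ (A + 1 + 1))
      ∧ (regBeta (4 * p * q) (z : ℝ) (1 / 2) - lam ^ (A + 1)) / (1 - lam ^ (A + 1))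
        < regBeta (4 * p * q) (z : ℝ) (1 / 2) := by
  have hp0 : 0 < p := by linarith
  have hl0 : 0 < lam := by rw [hlam]; positivity
  have hl1 : lam < 1 := by rw [hlam, div_lt_one hp0]; linarith
  have hI := regBeta_lt_one_aux (4 * p * q) z hz (by positivity)
    (by rw [hp]; nlinarith [mul_pos (sub_pos.2 hq2) (sub_pos.2 hq2)])
  generalize regBeta (4 * p * q) (z : ℝ) (1 / 2) = I at hI ⊢
  have hu0 : 0 < lam ^ (A + 1) := pow_pos hl0 _
  have hu1 : lam ^ (A + 1) < 1 := pow_lt_one₀ hl0.le hl1 (by omega)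
  have hv1 : lam ^ (A + 1 + 1) < 1 := pow_lt_one₀ hl0.le hl1 (by omega)
  have hvu : lam ^ (A + 1 + 1) < lam ^ (A + 1) := pow_lt_pow_right_of_lt_one₀ hl0 hl1 (by omega)
  generalize lam ^ (A + 1 + 1) = v at *
  generalize lam ^ (A + 1) = u at *
  constructor
  · rw [div_lt_div_iff₀ (by linarith) (by linarith)]
    nlinarith [mul_pos (sub_pos.2 hvu) (sub_pos.2 hI)]
  · rw [div_lt_iff₀ (by linarith)]
    nlinarith [mul_pos hu0 (sub_pos.2 hI)]
end

section
/- Let z ≥ 1 be a fixed integer. Then, with p = 1 − q, I_{4pq}(z, 1/2) ~ 2 C(2z−1, z) q^z as q → 0⁺; that is, the limit as q → 0⁺ of I_{4pq}(z, 1/2) / q^z equals 2 C(2z−1, z), where C(n,k) denotes the binomial coefficient. -/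
open scoped BigOperators
open Filter

theorem Beta_eq_beta (a b : ℝ) (ha : 0 < a) (hb : 0 < b) :
    Beta a b = ProbabilityTheory.beta a b := by
  rw [ProbabilityTheory.beta_eq_betaIntegralReal a b ha hb, Complex.betaIntegral, Beta]
  have : (∫ x : ℝ in (0:ℝ)..1, (x : ℂ) ^ ((a:ℂ) - 1) * (1 - (x : ℂ)) ^ ((b:ℂ) - 1))
      = ∫ x : ℝ in (0:ℝ)..1, ((x ^ (a - 1) * (1 - x) ^ (b - 1) : ℝ) : ℂ) := by
    apply intervalIntegral.integral_congr
    intro x hx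
    rw [Set.uIcc_of_le zero_le_one] at hx
    have h1 : (0:ℝ) ≤ 1 - x := by linarith [hx.2]
    simp only
    rw [Complex.ofReal_mul, Complex.ofReal_cpow hx.1, Complex.ofReal_cpow h1]
    push_cast
    rfl
  rw [this, intervalIntegral.integral_ofReal, Complex.ofReal_re]

theorem Beta_half (n : ℕ) :
    ((n:ℝ) + 1) * Beta ((n:ℝ) + 1) (1/2) * (Nat.centralBinom (n+1) : ℝ) = 4 ^ (n+1) := by
  rw [Beta_eq_beta _ _ (by positivity) (by norm_num)]
  induction n with
  | zero =>
    have h := Real.Gamma_add_one (s := 1/2) (by norm_num)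
    have hp : Real.Gamma (1/2) ≠ 0 := (Real.Gamma_pos_of_pos (by norm_num)).ne'
    have hc : Nat.centralBinom 1 = 2 := by decide
    simp only [ProbabilityTheory.beta, Nat.cast_zero, zero_add, hc, Real.Gamma_one]
    rw [add_comm (1:ℝ) (1/2), h]
    field_simp
    norm_num
  | succ n ih =>
    have h1 := Real.Gamma_add_one (s := (n:ℝ) + 1) (by positivity)
    have h2 := Real.Gamma_add_one (s := (n:ℝ) + 1 + 1/2) (by positivity)
    have hp : Real.Gamma ((n:ℝ) + 1 + 1/2) ≠ 0 := (Real.Gamma_pos_of_pos (by positivity)).ne'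
    have hc : ((n:ℝ) + 1 + 1) * (Nat.centralBinom (n+1+1) : ℝ)
        = 2 * (2 * ((n:ℝ) + 1) + 1) * (Nat.centralBinom (n+1) : ℝ) := by
      exact_mod_cast Nat.succ_mul_centralBinom_succ (n+1)
    have hb : ProbabilityTheory.beta ((n:ℝ) + 1 + 1) (1/2) * ((n:ℝ) + 1 + 1/2)
        = ((n:ℝ) + 1) * ProbabilityTheory.beta ((n:ℝ) + 1) (1/2) := by
      have hq : (n:ℝ) + 1 + 1/2 ≠ 0 := by positivity
      unfold ProbabilityTheory.beta
      rw [show (n:ℝ) + 1 + 1 + 1/2 = (n:ℝ) + 1 + 1/2 + 1 by ring, h1, h2]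
      generalize Real.Gamma ((n:ℝ) + 1 + 1/2) = G at *
      generalize (n:ℝ) + 1 + 1/2 = w at *
      field_simp
    push_cast
    rw [pow_succ, ← ih]
    linear_combination (ProbabilityTheory.beta ((n:ℝ) + 1 + 1) (1/2)) * hc
      + 4 * (Nat.centralBinom (n+1) : ℝ) * hb

theorem incBeta_bounds (n : ℕ) (x : ℝ) (h0 : 0 ≤ x) (h1 : x < 1) :
    x ^ (n+1) / ((n:ℝ)+1) ≤ ∫ t in (0:ℝ)..x, t ^ ((n:ℝ) + 1 - 1) * (1 - t) ^ ((1:ℝ)/2 - 1) ∧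
    (∫ t in (0:ℝ)..x, t ^ ((n:ℝ) + 1 - 1) * (1 - t) ^ ((1:ℝ)/2 - 1)) ≤
      x ^ (n+1) / ((n:ℝ)+1) * (1 - x) ^ ((1:ℝ)/2 - 1) := by
  have e : x ^ (n+1) / ((n:ℝ)+1) = ∫ t in (0:ℝ)..x, t ^ n := by simp
  have hs : ∀ t : ℝ, t ^ ((n:ℝ) + 1 - 1) = t ^ n := by
    intro t; rw [add_sub_cancel_right, Real.rpow_natCast]
  simp only [hs]
  rw [e, ← intervalIntegral.integral_mul_const]
  have c1 : IntervalIntegrable (fun t : ℝ => t ^ n) MeasureTheory.volume 0 x :=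
    (continuous_pow n).intervalIntegrable _ _
  have c2 : IntervalIntegrable (fun t : ℝ => t ^ n * (1 - t) ^ ((1:ℝ)/2 - 1))
      MeasureTheory.volume 0 x := by
    apply ContinuousOn.intervalIntegrable
    rw [Set.uIcc_of_le h0]
    apply ContinuousOn.mul (by fun_prop)
    apply ContinuousOn.rpow_const (by fun_prop)
    intro t ht
    left
    linarith [ht.2]
  constructor
  · apply intervalIntegral.integral_mono_on h0 c1 c2
    intro t ht
    have := Real.one_le_rpow_of_pos_of_le_one_of_nonpos (x := 1 - t) (z := (1:ℝ)/2 - 1)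
      (by linarith [ht.2]) (by linarith [ht.1]) (by norm_num)
    exact le_mul_of_one_le_right (pow_nonneg ht.1 n) this
  · apply intervalIntegral.integral_mono_on h0 c2 (c1.mul_const _)
    intro t ht
    apply mul_le_mul_of_nonneg_left _ (pow_nonneg ht.1 n)
    exact Real.rpow_le_rpow_of_nonpos (by linarith) (by linarith [ht.2]) (by norm_num)

/-- `I_{4pq}(z,1/2) ~ 2 C(2z-1,z) q^z` as `q → 0⁺`, with `p = 1 - q`. -/
theorem regBeta_asymptotics_small_q (z : ℕ) (hz : 1 ≤ z) :
    Tendsto (fun q : ℝ => regBeta (4 * (1 - q) * q) (z : ℝ) (1 / 2) / q ^ z)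
      (nhdsWithin 0 (Set.Ioi 0)) (nhds (2 * ((2 * z - 1).choose z : ℝ))) := by
  obtain ⟨n, rfl⟩ : ∃ n, z = n + 1 := ⟨z - 1, by omega⟩
  have hB := Beta_half n
  have hcb : (Nat.centralBinom (n+1) : ℝ) = 2 * ((2 * (n+1) - 1).choose (n+1) : ℝ) := by
    have : Nat.centralBinom (n+1) = 2 * (2 * (n+1) - 1).choose (n+1) := by
      rw [Nat.centralBinom_eq_two_mul_choose, show 2 * (n+1) - 1 = 2 * n + 1 by omega,
        show 2 * (n+1) = 2 * n + 1 + 1 by ring, Nat.choose_succ_succ',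
        Nat.choose_symm_of_eq_add (show 2 * n + 1 = n + (n+1) by ring)]
      ring
    exact_mod_cast this
  have hBp : 0 < Beta ((n:ℝ) + 1) (1/2) := by
    rw [Beta_eq_beta _ _ (by positivity) (by norm_num)]
    exact ProbabilityTheory.beta_pos (by positivity) (by norm_num)
  rw [← hcb]
  set B := Beta ((n:ℝ) + 1) (1/2) with hBdef
  have hval : (Nat.centralBinom (n+1) : ℝ) = 4 ^ (n+1) / ((n:ℝ)+1) / B := by
    rw [eq_div_iff hBp.ne', eq_div_iff (by positivity), ← hB]
    ring
  rw [hval]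
  have ev : ∀ᶠ q : ℝ in nhdsWithin 0 (Set.Ioi 0), 0 < q ∧ q < 1/4 := by
    have := Ioo_mem_nhdsGT (show (0:ℝ) < 1/4 by norm_num)
    filter_upwards [this] with q hq using hq
  have key : ∀ q : ℝ, 0 < q → (4 * (1 - q) * q) ^ (n+1) / ((n:ℝ)+1)
      = (4 * (1 - q)) ^ (n+1) / ((n:ℝ)+1) * q ^ (n+1) := by
    intro q hq
    rw [mul_pow]
    ring
  refine tendsto_of_tendsto_of_tendsto_of_le_of_le'
    (g := fun q : ℝ => (4 * (1 - q)) ^ (n+1) / ((n:ℝ)+1) / B)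
    (h := fun q : ℝ => (4 * (1 - q)) ^ (n+1) / ((n:ℝ)+1)
      * (1 - 4 * (1 - q) * q) ^ ((1:ℝ)/2 - 1) / B) ?_ ?_ ?_ ?_
  · have : ContinuousAt (fun q : ℝ => (4 * (1 - q)) ^ (n+1) / ((n:ℝ)+1) / B) 0 := by fun_prop
    have := this.tendsto.mono_left (nhdsWithin_le_nhds (s := Set.Ioi 0))
    simpa using this
  · have : ContinuousAt (fun q : ℝ => (4 * (1 - q)) ^ (n+1) / ((n:ℝ)+1)
      * (1 - 4 * (1 - q) * q) ^ ((1:ℝ)/2 - 1) / B) 0 := by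
      apply ContinuousAt.div_const
      apply ContinuousAt.mul (by fun_prop)
      apply ContinuousAt.rpow_const (by fun_prop)
      left
      norm_num
    have := this.tendsto.mono_left (nhdsWithin_le_nhds (s := Set.Ioi 0))
    simpa using this
  · filter_upwards [ev] with q hq
    have hb := (incBeta_bounds n (4 * (1 - q) * q) (by nlinarith) (by nlinarith)).1
    rw [key q hq.1] at hb
    have hqp : 0 < q ^ (n+1) := pow_pos hq.1 _
    simp only [regBeta, Nat.cast_add, Nat.cast_one, ← hBdef]
    rw [div_right_comm _ B]
    apply div_le_div_of_nonneg_right _ hBp.le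
    rwa [le_div_iff₀ hqp]
  · filter_upwards [ev] with q hq
    have hb := (incBeta_bounds n (4 * (1 - q) * q) (by nlinarith) (by nlinarith)).2
    rw [key q hq.1] at hb
    have hqp : 0 < q ^ (n+1) := pow_pos hq.1 _
    simp only [regBeta, Nat.cast_add, Nat.cast_one, ← hBdef]
    rw [div_right_comm _ B]
    apply div_le_div_of_nonneg_right _ hBp.le
    rw [div_le_iff₀ hqp]
    linarith
end

section
/- Let 0 < q < 1/2, p = 1 - q, λ = q/p, let z ≥ 1 and A ≥ z be integers, and write [A+1] = (1 − λ^{A+1})/(1 − λ). Then (A+1)/((p−q)(1 − λ^{A+1})) − p^{z−1} q^z / ((p−q) B(z,z)) + ( z/p − 2(A+1)/((p−q)(1 − λ^{A+1})) ) · I_q(z, z) = (z/(2p)) I_{4pq}(z, 1/2) + ( (A+1) / ( p (1 − λ)^2 [A+1] ) ) I_{(p−q)^2}(1/2, z) − p^{z−1} q^z / ( p (1 − λ) B(z,z) ). (This identifies the two expressions for the expected duration E[T_A]/τ₀ − 1/q of the A-Nakamoto double spend attack given, respectively, in the duration Proposition and in the main Theorem.) -/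
open scoped BigOperators
open Filter

/-- the integrand of `B(n+1, 1/2)`. -/
lemma half_integrable (n : ℕ) :
    IntervalIntegrable (fun s : ℝ => s ^ n * (1 - s) ^ (-(1/2) : ℝ)) MeasureTheory.volume 0 1 := by
  have h1 : IntervalIntegrable (fun s : ℝ => s ^ (-(1/2) : ℝ)) MeasureTheory.volume 0 1 :=
    intervalIntegral.intervalIntegrable_rpow' (by norm_num)
  have h2 := (h1.comp_sub_left 1).symm
  rw [sub_self, sub_zero] at h2
  exact h2.continuousOn_mul (g := fun s : ℝ => s ^ n) (by fun_prop)

lemma nak_half_sub (n : ℕ) (x : ℝ) (hx0 : 0 ≤ x) (hx : x ≤ 1 / 2) :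
    ∫ s in (0:ℝ)..(4 * x * (1 - x)), s ^ n * (1 - s) ^ (-(1/2) : ℝ)
      = 4 ^ (n + 1) * ∫ t in (0:ℝ)..x, t ^ n * (1 - t) ^ n := by
  have key : ∀ t : ℝ, t < 1 / 2 →
      ((4 * t * (1 - t)) ^ n * (1 - 4 * t * (1 - t)) ^ (-(1/2) : ℝ)) * (4 * (1 - 2 * t))
        = 4 ^ (n + 1) * (t ^ n * (1 - t) ^ n) := by
    intro t ht
    have hpos : 0 < 1 - 2 * t := by linarith
    have e : (1 - 4 * t * (1 - t)) = (1 - 2 * t) ^ (2 : ℝ) := by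
      rw [Real.rpow_two]; ring
    have e2 : (2 : ℝ) * (-(1/2)) = -1 := by norm_num
    rw [e, ← Real.rpow_mul hpos.le, e2, Real.rpow_neg_one, mul_pow, mul_pow]
    have hi : (1 - 2 * t)⁻¹ * (1 - 2 * t) = 1 := inv_mul_cancel₀ hpos.ne'
    linear_combination (4 ^ n * t ^ n * (1 - t) ^ n * 4) * hi
  have hsub : (fun t : ℝ => 4 * t * (1 - t)) '' Set.Icc 0 x ⊆ Set.Icc 0 1 := by
    rintro _ ⟨t, ⟨h0, h1⟩, rfl⟩
    constructor
    · have : 0 ≤ 1 - t := by linarith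
      positivity
    · nlinarith [sq_nonneg (1 - 2 * t)]
  have hint := (intervalIntegrable_iff_integrableOn_Icc_of_le (by norm_num)).1 (half_integrable n)
  have hae : ∀ᵐ t : ℝ, t ∈ Set.uIoc 0 x →
      ((4 * t * (1 - t)) ^ n * (1 - 4 * t * (1 - t)) ^ (-(1/2) : ℝ)) * (4 * (1 - 2 * t))
        = 4 ^ (n + 1) * (t ^ n * (1 - t) ^ n) := by
    have : ∀ᵐ t : ℝ, t ≠ 1 / 2 := by
      simp [MeasureTheory.ae_iff]
    filter_upwards [this] with t ht hm
    rw [Set.uIoc_of_le hx0] at hm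
    exact key t (lt_of_le_of_ne (hm.2.trans hx) ht)
  have hcont : IntervalIntegrable (fun t : ℝ => (4:ℝ) ^ (n + 1) * (t ^ n * (1 - t) ^ n))
      MeasureTheory.volume 0 x := Continuous.intervalIntegrable (by fun_prop) _ _
  have main := intervalIntegral.integral_comp_mul_deriv''' (a := 0) (b := x)
    (f := fun t : ℝ => 4 * t * (1 - t)) (f' := fun t => 4 * (1 - 2 * t))
    (g := fun s : ℝ => s ^ n * (1 - s) ^ (-(1/2) : ℝ)) (by fun_prop)
    (by
      intro t _
      have h : HasDerivAt (fun t : ℝ => 4 * t * (1 - t)) (4 * (1 - 2 * t)) t := by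
        have := ((hasDerivAt_id t).const_mul 4).mul ((hasDerivAt_id t).const_sub 1)
        refine HasDerivAt.congr_deriv this ?_
        simp only [id]; ring
      exact h.hasDerivWithinAt)
    (by
      rw [min_eq_left hx0, max_eq_right hx0]
      rintro _ ⟨t, ⟨h0, h1⟩, rfl⟩
      apply ContinuousAt.continuousWithinAt
      apply ContinuousAt.mul (by fun_prop)
      apply ContinuousAt.rpow_const (by fun_prop)
      left
      have : 0 < (1 - 2 * t) := by linarith
      have : 0 < (1 - 2 * t) ^ 2 := by positivity
      show 1 - 4 * t * (1 - t) ≠ 0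
      nlinarith)
    (by
      rw [Set.uIcc_of_le hx0]
      exact hint.mono_set hsub)
    (by
      rw [← intervalIntegrable_iff']
      refine hcont.congr_ae ?_
      rw [Filter.EventuallyEq, MeasureTheory.ae_restrict_iff' measurableSet_uIoc]
      filter_upwards [hae] with t ht hm
      exact (ht hm).symm)
  simp only [mul_zero, zero_mul] at main
  rw [← main, ← intervalIntegral.integral_const_mul]
  exact intervalIntegral.integral_congr_ae hae

lemma sym_half (n : ℕ) : ∫ t in (0:ℝ)..1, t ^ n * (1 - t) ^ n
    = 2 * ∫ t in (0:ℝ)..(1/2), t ^ n * (1 - t) ^ n := by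
  have hc : Continuous (fun t : ℝ => t ^ n * (1 - t) ^ n) := by fun_prop
  have h := intervalIntegral.integral_comp_sub_left (a := 0) (b := 1/2)
    (fun t : ℝ => t ^ n * (1 - t) ^ n) 1
  rw [← intervalIntegral.integral_add_adjacent_intervals (b := 1/2)
    (hc.intervalIntegrable _ _) (hc.intervalIntegrable _ _)]
  have e : (1:ℝ) - 1/2 = 1/2 := by norm_num
  rw [e, sub_zero] at h
  rw [← h, two_mul]
  congr 1
  congr 1
  ext t
  ring

lemma reflect (n : ℕ) (y : ℝ) : ∫ t in (0:ℝ)..y, t ^ (-(1/2) : ℝ) * (1 - t) ^ n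
    = ∫ s in (1 - y)..1, s ^ n * (1 - s) ^ (-(1/2) : ℝ) := by
  have h := intervalIntegral.integral_comp_sub_left (a := 0) (b := y)
    (fun s : ℝ => s ^ n * (1 - s) ^ (-(1/2) : ℝ)) 1
  rw [sub_zero] at h
  rw [← h]
  congr 1
  ext t
  rw [sub_sub_cancel, mul_comm]

lemma regs (q : ℝ) (hq0 : 0 < q) (hq2 : q < 1 / 2) (n : ℕ) :
    regBeta (4 * (1 - q) * q) ((n + 1 : ℕ) : ℝ) (1 / 2)
      = 2 * regBeta q ((n + 1 : ℕ) : ℝ) ((n + 1 : ℕ) : ℝ) ∧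
    regBeta ((1 - q - q) ^ 2) (1 / 2) ((n + 1 : ℕ) : ℝ)
      = 1 - 2 * regBeta q ((n + 1 : ℕ) : ℝ) ((n + 1 : ℕ) : ℝ) := by
  have e1 : (((n + 1 : ℕ) : ℝ) - 1) = (n : ℝ) := by push_cast; ring
  have e2 : ((1 / 2 : ℝ) - 1) = -(1/2) := by norm_num
  unfold regBeta Beta
  simp only [e1, e2, Real.rpow_natCast]
  rw [reflect, reflect, sym_half]
  have hF := nak_half_sub n q hq0.le hq2.le
  have hB := nak_half_sub n (1/2) (by norm_num) le_rfl
  have a1 : 4 * (1/2 : ℝ) * (1 - 1/2) = 1 := by norm_num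
  rw [a1] at hB
  have a2 : 1 - (1 - q - q) ^ 2 = 4 * q * (1 - q) := by ring
  have a3 : 4 * (1 - q) * q = 4 * q * (1 - q) := by ring
  rw [a2, a3, sub_self]
  have m0 : 0 ≤ 4 * q * (1 - q) := by nlinarith
  have m1 : 4 * q * (1 - q) ≤ 1 := by nlinarith [sq_nonneg (1 - 2 * q)]
  have hI := half_integrable n
  have hadd := intervalIntegral.integral_add_adjacent_intervals
    (hI.mono_set (c := 0) (d := 4 * q * (1 - q)) (by
      rw [Set.uIcc_of_le m0, Set.uIcc_of_le zero_le_one]; exact Set.Icc_subset_Icc le_rfl m1))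
    (hI.mono_set (c := 4 * q * (1 - q)) (d := 1) (by
      rw [Set.uIcc_of_le m1, Set.uIcc_of_le zero_le_one]; exact Set.Icc_subset_Icc m0 le_rfl))
  have hpos : 0 < ∫ t in (0:ℝ)..(1/2), t ^ n * (1 - t) ^ n := by
    apply intervalIntegral.intervalIntegral_pos_of_pos_on
    · exact Continuous.intervalIntegrable (by fun_prop) _ _
    · intro t ht
      have h1 := ht.1
      have h2 : 0 < 1 - t := by linarith [ht.2]
      positivity
    · norm_num
  have hrest := eq_sub_of_add_eq' hadd
  rw [hrest, hF, hB]
  generalize (∫ t in (0:ℝ)..(1/2), t ^ n * (1 - t) ^ n) = b at *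
  generalize (∫ t in (0:ℝ)..q, t ^ n * (1 - t) ^ n) = f at *
  constructor <;> field_simp

/-- equality of the two expressions for the expected duration
`E[T_A]/τ₀ − 1/q` of the `A`-Nakamoto double spend attack. -/
theorem nakamoto_duration_identity (q p lam : ℝ) (hq0 : 0 < q) (hq2 : q < 1 / 2)
    (hp : p = 1 - q) (hlam : lam = q / p) (z A : ℕ) (hz : 1 ≤ z) (hAz : z ≤ A) :
    ((A : ℝ) + 1) / ((p - q) * (1 - lam ^ (A + 1)))
        - p ^ (z - 1) * q ^ z / ((p - q) * Beta (z : ℝ) (z : ℝ))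
        + ((z : ℝ) / p - 2 * ((A : ℝ) + 1) / ((p - q) * (1 - lam ^ (A + 1))))
            * regBeta q (z : ℝ) (z : ℝ)
      = (z : ℝ) / (2 * p) * regBeta (4 * p * q) (z : ℝ) (1 / 2)
        + ((A : ℝ) + 1) / (p * (1 - lam) ^ 2 * ((1 - lam ^ (A + 1)) / (1 - lam)))
            * regBeta ((p - q) ^ 2) (1 / 2) (z : ℝ)
        - p ^ (z - 1) * q ^ z / (p * (1 - lam) * Beta (z : ℝ) (z : ℝ)) := by
  obtain ⟨n, rfl⟩ : ∃ n, z = n + 1 := ⟨z - 1, by omega⟩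
  subst hp
  obtain ⟨h1, h2⟩ := regs q hq0 hq2 n
  rw [h1, h2]
  have hp0 : 0 < 1 - q := by linarith
  have hpq : (1 - q) * (1 - lam) = 1 - q - q := by
    rw [hlam]; field_simp
  have hl : 1 - lam ≠ 0 := by
    intro h; rw [h] at hpq; linarith
  have hc : (1 - q) * (1 - lam) ^ 2 * ((1 - lam ^ (A + 1)) / (1 - lam))
      = (1 - q - q) * (1 - lam ^ (A + 1)) := by
    rw [← hpq]; field_simp
  rw [hc, hpq]
  have hz2 : ((n + 1 : ℕ) : ℝ) / (2 * (1 - q)) = ((n + 1 : ℕ) : ℝ) / (1 - q) / 2 := by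
    field_simp
  rw [hz2]
  ring
end

section
/- Fix integers z ≥ 1 and A ≥ z. For 0 < q < 1/2 set p = 1 − q, λ = q/p, [A+1] = (1 − λ^{A+1})/(1 − λ), and T(q) = (z/(2p)) I_{4pq}(z,1/2) + ((A+1)/(p(1−λ)^2[A+1])) I_{(p−q)^2}(1/2,z) − p^{z−1}q^z/(p(1−λ)B(z,z)) + 1/q. Then q · T(q) → 1 as q → 0⁺; that is, the expected duration of the A-Nakamoto attack cycle is asymptotic to 1/q interblock times as the attacker hashrate q tends to 0. -/
open scoped BigOperators
open Filter

lemma regBeta_mem (a b : ℝ)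
    (h : IntervalIntegrable (fun t : ℝ => t ^ (a - 1) * (1 - t) ^ (b - 1)) MeasureTheory.volume 0 1)
    (x : ℝ) (h0 : 0 ≤ x) (h1 : x ≤ 1) : |regBeta x a b| ≤ 1 := by
  have hpos : ∀ t : ℝ, t ∈ Set.Icc (0:ℝ) 1 → 0 ≤ t ^ (a - 1) * (1 - t) ^ (b - 1) := by
    intro t ht
    exact mul_nonneg (Real.rpow_nonneg ht.1 _) (Real.rpow_nonneg (by linarith [ht.2]) _)
  have hx0 : 0 ≤ ∫ t in (0:ℝ)..x, t ^ (a - 1) * (1 - t) ^ (b - 1) :=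
    intervalIntegral.integral_nonneg h0 fun t ht => hpos t ⟨ht.1, ht.2.trans h1⟩
  have hle : (∫ t in (0:ℝ)..x, t ^ (a - 1) * (1 - t) ^ (b - 1)) ≤ Beta a b := by
    unfold Beta
    refine intervalIntegral.integral_mono_interval le_rfl h0 h1 ?_ h
    refine (MeasureTheory.ae_restrict_iff' measurableSet_Ioc).2 (Filter.Eventually.of_forall ?_)
    intro t ht
    exact hpos t ⟨ht.1.le, ht.2⟩
  unfold regBeta
  rw [abs_of_nonneg (div_nonneg hx0 (hx0.trans hle))]
  exact div_le_one_of_le₀ hle (hx0.trans hle)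

lemma integrable_one (z : ℕ) (hz : 1 ≤ z) :
    IntervalIntegrable (fun t : ℝ => t ^ ((z:ℝ) - 1) * (1 - t) ^ ((1 / 2 : ℝ) - 1))
      MeasureTheory.volume 0 1 := by
  have hz' : (0:ℝ) ≤ (z:ℝ) - 1 := by
    have : (1:ℝ) ≤ z := by exact_mod_cast hz
    linarith
  have h1 : IntervalIntegrable (fun t : ℝ => t ^ ((1 / 2 : ℝ) - 1)) MeasureTheory.volume 1 0 :=
    intervalIntegral.intervalIntegrable_rpow' (by norm_num)
  have h2 := h1.comp_sub_left 1
  simp only [sub_self, sub_zero] at h2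
  exact h2.continuousOn_mul (Real.continuous_rpow_const hz').continuousOn

lemma integrable_two (z : ℕ) (hz : 1 ≤ z) :
    IntervalIntegrable (fun t : ℝ => t ^ ((1 / 2 : ℝ) - 1) * (1 - t) ^ ((z:ℝ) - 1))
      MeasureTheory.volume 0 1 := by
  have h2 := (integrable_one z hz).comp_sub_left 1
  simp only [sub_self, sub_zero, sub_sub_cancel] at h2
  exact h2.symm.congr (fun t _ => mul_comm _ _)

lemma tendsto_q_mul (g : ℝ → ℝ) (h : ∀ᶠ q in nhdsWithin (0:ℝ) (Set.Ioi 0), |g q| ≤ 1) :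
    Tendsto (fun q : ℝ => q * g q) (nhdsWithin 0 (Set.Ioi 0)) (nhds 0) := by
  have hid : Tendsto (fun q : ℝ => |q|) (nhdsWithin 0 (Set.Ioi 0)) (nhds 0) := by
    have : Tendsto (fun q : ℝ => |q|) (nhds 0) (nhds |0|) := continuous_abs.tendsto 0
    rw [abs_zero] at this
    exact this.mono_left nhdsWithin_le_nhds
  refine squeeze_zero_norm' ?_ hid
  filter_upwards [h] with q hq
  rw [Real.norm_eq_abs, abs_mul]
  exact mul_le_of_le_one_right (abs_nonneg _) hq

/-- the expected duration satisfies `q · T(q) → 1` as `q → 0⁺`. -/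
theorem nakamoto_duration_small_q (z A : ℕ) (hz : 1 ≤ z) (hAz : z ≤ A) :
    Tendsto (fun q : ℝ =>
        q * (let p : ℝ := 1 - q
             let lam : ℝ := q / p
             (z : ℝ) / (2 * p) * regBeta (4 * p * q) (z : ℝ) (1 / 2)
              + ((A : ℝ) + 1) / (p * (1 - lam) ^ 2 * ((1 - lam ^ (A + 1)) / (1 - lam)))
                  * regBeta ((p - q) ^ 2) (1 / 2) (z : ℝ)
              - p ^ (z - 1) * q ^ z / (p * (1 - lam) * Beta (z : ℝ) (z : ℝ))
              + 1 / q))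
      (nhdsWithin 0 (Set.Ioi 0)) (nhds 1) := by
  have hsmall : ∀ᶠ q in nhdsWithin (0:ℝ) (Set.Ioi 0), 0 < q ∧ q < 1 / 2 := by
    have := Ioo_mem_nhdsGT (show (0:ℝ) < 1 / 2 by norm_num)
    exact this
  have hR1 := tendsto_q_mul (fun q => regBeta (4 * (1 - q) * q) (z : ℝ) (1 / 2)) (by
    filter_upwards [hsmall] with q hq
    exact regBeta_mem _ _ (integrable_one z hz) _ (by nlinarith [hq.1, hq.2])
      (by nlinarith [sq_nonneg (2 * q - 1)]))
  have hR2 := tendsto_q_mul (fun q => regBeta ((1 - q - q) ^ 2) (1 / 2) (z : ℝ)) (by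
    filter_upwards [hsmall] with q hq
    exact regBeta_mem _ _ (integrable_two z hz) _ (sq_nonneg _) (by nlinarith [hq.1, hq.2]))
  have hid : Tendsto (fun q : ℝ => q) (nhdsWithin 0 (Set.Ioi 0)) (nhds 0) :=
    tendsto_id.mono_left nhdsWithin_le_nhds
  have hC1 : ContinuousAt (fun q : ℝ => (z : ℝ) / (2 * (1 - q))) 0 := by
    refine ContinuousAt.div (by fun_prop) (by fun_prop) (by norm_num)
  have hlam : ContinuousAt (fun q : ℝ => q / (1 - q)) 0 :=
    ContinuousAt.div (by fun_prop) (by fun_prop) (by norm_num)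
  have hC2 : ContinuousAt (fun q : ℝ => ((A : ℝ) + 1) / ((1 - q) * (1 - q / (1 - q)) ^ 2 *
      ((1 - (q / (1 - q)) ^ (A + 1)) / (1 - q / (1 - q))))) 0 := by
    refine ContinuousAt.div (by fun_prop) (ContinuousAt.mul (by fun_prop)
      (ContinuousAt.div (by fun_prop) (by fun_prop) (by norm_num))) (by simp)
  have hC3 : ContinuousAt (fun q : ℝ => (1 - q) ^ (z - 1) * q ^ z /
      ((1 - q) * (1 - q / (1 - q))) / Beta z z) 0 := by
    refine ContinuousAt.div_const (ContinuousAt.div (by fun_prop) (by fun_prop) (by norm_num)) _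
  have h1 := hR1.mul (hC1.tendsto.mono_left (nhdsWithin_le_nhds (s := Set.Ioi 0)))
  have h2 := hR2.mul (hC2.tendsto.mono_left (nhdsWithin_le_nhds (s := Set.Ioi 0)))
  have h3 := hid.mul (hC3.tendsto.mono_left (nhdsWithin_le_nhds (s := Set.Ioi 0)))
  have h4 := ((h1.add h2).sub h3).add_const 1
  simp only [zero_mul, add_zero, sub_zero, zero_add] at h4
  refine h4.congr' ?_
  filter_upwards [hsmall] with q hq
  have hq0 : q * (1 / q) = 1 := mul_one_div_cancel hq.1.ne'
  rw [div_div]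
  dsimp only
  rw [mul_add q _ (1 / q), hq0]
  ring
end
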